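/- arXiv:1504.00589 — 3 statements merged into one kernel-verified Lean document; each statement's English description precedes it below -/
import Mathlib

section
/- Let A : V → V be a self-adjoint linear map and H = (trace A)/2. Then A^c := H • id commutes with J and A^a := A − H • id anticommutes with J, i.e. (A − H • id) ∘ J = −J ∘ (A − H • id); hence A = A^c + A^a is a decomposition of A into a part commuting with J and a part anticommuting with J. -/
/-!
The claim reduces to `A J + J A = (trace A) J`. For any unit vector `e` the pair `(e, J e)` is
an orthonormal basis of `V`, so `trace A = ⟪e, A e⟫ + ⟪J e, A (J e)⟫`. The operator `J` is
skew-adjoint, hence so is `A J + J A` for self-adjoint `A`: both sides have zero diagonal in the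
basis `(e, J e)`, and their off-diagonal entries are `± trace A`.
-/

open RealInnerProductSpace

/-- In dimension two, an orthogonal complex structure `J` admits an orthonormal basis of the form
`(e, J e)`. -/
lemma exists_adapted_orthonormalBasis
    {V : Type*} [NormedAddCommGroup V] [InnerProductSpace ℝ V]
    [FiniteDimensional ℝ V] (hdim : Module.finrank ℝ V = 2)
    (J : V →ₗ[ℝ] V) (hJorth : ∀ x y : V, ⟪J x, J y⟫ = ⟪x, y⟫)
    (hskew : ∀ x y : V, ⟪J x, y⟫ = -⟪x, J y⟫) :
    ∃ b : OrthonormalBasis (Fin 2) ℝ V, b 1 = J (b 0) := by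
  have : Nontrivial V := Module.nontrivial_of_finrank_pos (R := ℝ) (by omega)
  obtain ⟨e, he⟩ := exists_norm_eq V (zero_le_one' ℝ)
  have hee : ⟪e, e⟫ = 1 := by rw [real_inner_self_eq_norm_sq, he]; norm_num
  have hperp : ⟪e, J e⟫ = 0 := by
    have h := hskew e e
    rw [real_inner_comm] at h
    linarith
  have hon : Orthonormal ℝ ![e, J e] := by
    rw [orthonormal_iff_ite]
    intro i j
    fin_cases i <;> fin_cases j <;>
      simp [hJorth, hee, hperp, hskew, -inner_self_eq_norm_sq_to_K]
  have hspan : ⊤ ≤ Submodule.span ℝ (Set.range ![e, J e]) :=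
    (hon.linearIndependent.span_eq_top_of_card_eq_finrank (by simp [hdim])).ge
  exact ⟨OrthonormalBasis.mk hon hspan, by simp⟩

/-- For a self-adjoint operator `A` on a 2-dimensional real inner product space with
rotation `J` (orthogonal, `J ∘ J = -id`) and `H = (trace A)/2`, the part
`A^c = H • id` commutes with `J` and the part `A^a = A - H • id` anticommutes with `J`;
together with `A = A^c + A^a` this decomposes `A` into commuting and anticommuting parts. -/
theorem commuting_anticommuting_decomposition
    {V : Type*} [NormedAddCommGroup V] [InnerProductSpace ℝ V]
    [FiniteDimensional ℝ V] (hdim : Module.finrank ℝ V = 2)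
    (J A : V →ₗ[ℝ] V)
    (hJ2 : J ∘ₗ J = -LinearMap.id)
    (hJorth : ∀ x y : V, ⟪J x, J y⟫ = ⟪x, y⟫)
    (hA : ∀ x y : V, ⟪A x, y⟫ = ⟪x, A y⟫)
    (H : ℝ) (hH : H = LinearMap.trace ℝ V A / 2) :
    ((H • LinearMap.id : V →ₗ[ℝ] V) ∘ₗ J = J ∘ₗ (H • LinearMap.id) ∧
      (A - H • LinearMap.id) ∘ₗ J = -(J ∘ₗ (A - H • LinearMap.id))) ∧
      A = H • LinearMap.id + (A - H • LinearMap.id) := by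
  have hJJ : ∀ x, J (J x) = -x := fun x => by simpa using LinearMap.congr_fun hJ2 x
  have hskew : ∀ x y : V, ⟪J x, y⟫ = -⟪x, J y⟫ := fun x y => by
    rw [← hJorth x (J y), hJJ, inner_neg_right, neg_neg]
  obtain ⟨b, hb⟩ := exists_adapted_orthonormalBasis hdim J hJorth hskew
  have htr : 2 * H = ⟪b 0, A (b 0)⟫ + ⟪J (b 0), A (J (b 0))⟫ := by
    rw [hH, LinearMap.trace_eq_sum_inner A b, Fin.sum_univ_two, hb]
    ring
  have h00 : ⟪b 0, b 0⟫ = 1 := by simp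
  have h01 : ⟪b 0, J (b 0)⟫ = 0 := by rw [← hb]; simp
  have hsymm : ⟪b 0, A (J (b 0))⟫ = ⟪J (b 0), A (b 0)⟫ := by
    rw [← hA, real_inner_comm]
  -- Comparison of matrix entries in the basis `(e, J e)`.
  have hanti : A ∘ₗ J + J ∘ₗ A = (2 * H) • J := by
    refine b.toBasis.ext fun i => InnerProductSpace.ext_inner_left_basis b.toBasis fun j => ?_
    have hJr : ∀ x y : V, ⟪x, J y⟫ = -⟪J x, y⟫ := fun x y => by rw [hskew, neg_neg]
    have h10 : ⟪J (b 0), b 0⟫ = 0 := by rw [hskew, h01, neg_zero]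
    fin_cases i <;> fin_cases j <;>
      simp only [Fin.zero_eta, Fin.mk_one, OrthonormalBasis.coe_toBasis, hb,
        LinearMap.add_apply, LinearMap.comp_apply, LinearMap.smul_apply, inner_add_right,
        inner_smul_right, hJr _ (A _), hJorth, hJJ, map_neg, inner_neg_left, inner_neg_right,
        hsymm, h00, h01, h10] <;>
      linarith
  refine ⟨⟨by ext x; simp, ?_⟩, by abel⟩
  ext x
  have h := LinearMap.congr_fun hanti x
  simp only [LinearMap.add_apply, LinearMap.comp_apply, LinearMap.smul_apply] at h
  simp only [LinearMap.comp_apply, LinearMap.sub_apply, LinearMap.smul_apply, LinearMap.neg_apply,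
    LinearMap.id_apply, map_sub, map_smul]
  rw [eq_sub_of_add_eq h]
  module
end

section
/- Let A : V → V be a self-adjoint linear map, H = (trace A)/2, and F₁, F₂, θ ∈ ℝ. Then det( F₁ • (e^{−2Jθ} ∘ (A − H • id)) + (F₂ H) • id ) = F₁² · det A + (F₂² − F₁²) · H². (Paper's Lemma 3.4: det A_θ = F₁² det A + (F₂² − F₁²) H² for the shape operators A_θ = F₁ e^{−2Jθ}(A − H·id) + F₂ H·id of a generalized associate family.) -/
/-! In an orthonormal basis, `J` is skew, hence has matrix `!![0, -j; j, 0]` with `j ^ 2 = 1`, and the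
traceless part `A - H • id` has a symmetric traceless matrix `!![p, q; q, -p]`. Composing the latter
with a rotation keeps it symmetric and traceless with the same determinant `-(p ^ 2 + q ^ 2)`, and
adding `t • id` to a traceless endomorphism of the plane adds `t ^ 2` to its determinant. Hence
`det A_θ = F₁ ^ 2 * det (A - H • id) + F₂ ^ 2 * H ^ 2`, while `det (A - H • id) = det A - H ^ 2`. -/

open RealInnerProductSpace

/-- Paper's Lemma 3.4: for the shape operators
`A_θ = F₁ • (e^{-2Jθ} ∘ (A - H • id)) + (F₂ H) • id` of a generalized associate family,
with `A` self-adjoint, `H = (trace A)/2` and `e^{Jθ} = (cos θ) • id + (sin θ) • J`, one has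
`det A_θ = F₁² det A + (F₂² - F₁²) H²`. -/
theorem det_A_theta
    {V : Type*} [NormedAddCommGroup V] [InnerProductSpace ℝ V]
    [FiniteDimensional ℝ V] (hdim : Module.finrank ℝ V = 2)
    (J A : V →ₗ[ℝ] V)
    (hJ2 : J ∘ₗ J = -LinearMap.id)
    (hJorth : ∀ x y : V, ⟪J x, J y⟫ = ⟪x, y⟫)
    (hA : ∀ x y : V, ⟪A x, y⟫ = ⟪x, A y⟫)
    (H : ℝ) (hH : H = LinearMap.trace ℝ V A / 2)
    (expJ : ℝ → (V →ₗ[ℝ] V))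
    (hexpJ : ∀ θ : ℝ, expJ θ = Real.cos θ • LinearMap.id + Real.sin θ • J)
    (F₁ F₂ θ : ℝ) :
    LinearMap.det
        (F₁ • (expJ (-(2 * θ)) ∘ₗ (A - H • LinearMap.id)) + (F₂ * H) • LinearMap.id) =
      F₁ ^ 2 * LinearMap.det A + (F₂ ^ 2 - F₁ ^ 2) * H ^ 2 := by
  have hJJ : ∀ x, J (J x) = -x := fun x => by
    simpa using LinearMap.congr_fun hJ2 x
  have hskew : ∀ x y : V, ⟪x, J y⟫ = -⟪y, J x⟫ := fun x y => by
    rw [← hJorth x (J y), hJJ, inner_neg_right, real_inner_comm]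
  let e : OrthonormalBasis (Fin 2) ℝ V := (stdOrthonormalBasis ℝ V).reindex (finCongr hdim)
  let b := e.toBasis
  have hentry : ∀ (T : V →ₗ[ℝ] V) (i k : Fin 2),
      LinearMap.toMatrix b b T i k = ⟪e i, T (e k)⟫ := fun T i k => by
    simp [b, LinearMap.toMatrix_apply, OrthonormalBasis.repr_apply_apply]
  set M := LinearMap.toMatrix b b A with hM
  set N := LinearMap.toMatrix b b J with hN
  have hMsymm : M 0 1 = M 1 0 := by
    rw [hM, hentry, hentry, ← hA, real_inner_comm]
  have hNskew : ∀ i k, N i k = -N k i := fun i k => by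
    rw [hN, hentry, hentry, hskew]
  have hN00 : N 0 0 = 0 := by linarith [hNskew 0 0]
  have hN11 : N 1 1 = 0 := by linarith [hNskew 1 1]
  have hN01 := hNskew 0 1
  have hNN : N * N = -1 := by
    rw [hN, ← LinearMap.toMatrix_comp, hJ2, map_neg, LinearMap.toMatrix_id]
  have hj : N 1 0 ^ 2 = 1 := by
    have h := congrFun (congrFun hNN 0) 0
    simp [Matrix.mul_apply, Fin.sum_univ_two, hN00, hN01] at h
    linarith
  have htr : LinearMap.trace ℝ V A = M 0 0 + M 1 1 := by
    rw [LinearMap.trace_eq_matrix_trace ℝ b, Matrix.trace_fin_two]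
  have hM11 : M 1 1 = 2 * H - M 0 0 := by linarith
  have hcs := Real.sin_sq_add_cos_sq (-(2 * θ))
  rw [hexpJ, ← LinearMap.det_toMatrix b, ← LinearMap.det_toMatrix b A, ← hM]
  generalize Real.cos (-(2 * θ)) = c at *
  generalize Real.sin (-(2 * θ)) = s at *
  have hmat : LinearMap.toMatrix b b
      (F₁ • ((c • LinearMap.id + s • J) ∘ₗ (A - H • LinearMap.id)) + (F₂ * H) • LinearMap.id) =
      F₁ • ((c • 1 + s • N) * (M - H • 1)) + (F₂ * H) • (1 : Matrix (Fin 2) (Fin 2) ℝ) := by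
    simp only [map_add, map_smul, map_sub, LinearMap.toMatrix_comp b b b, LinearMap.toMatrix_id,
      ← hM, ← hN]
  rw [hmat, Matrix.det_fin_two, Matrix.det_fin_two]
  simp only [Matrix.add_apply, Matrix.smul_apply, Matrix.mul_apply, Matrix.sub_apply,
    Fin.sum_univ_two, Matrix.one_apply_eq, Matrix.one_apply_ne zero_ne_one,
    Matrix.one_apply_ne one_ne_zero, smul_eq_mul, hN00, hN11, hN01, hM11, hMsymm]
  -- The two sides differ by `-F₁ ^ 2 * (p ^ 2 + q ^ 2) * (c ^ 2 + j ^ 2 * s ^ 2 - 1)`,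
  -- where `p = M 0 0 - H`, `q = M 1 0` and `j = N 1 0`.
  linear_combination
    (-F₁ ^ 2 * ((M 0 0 - H) ^ 2 + M 1 0 ^ 2)) * (s ^ 2 * hj + hcs)
end

section
/- Let I ⊆ ℝ be a nonempty open interval and a, a', a'' : ℝ → ℝ be functions such that for every t ∈ I: a(t) > 0, a has derivative a'(t) at t, a' has derivative a''(t) at t, and a''(t)·a(t) − a'(t)² − 1 = 0. Then there exist constants C₁ > 0 and C₂ ∈ ℝ such that a(t) = cosh(C₁ t + C₂)/C₁ for all t ∈ I. (Paper's Lemma 2.7, case ε·ε₀ = −1: the solutions of a''a − (a')² + ε ε₀ = 0 are a(t) = C₁⁻¹ cosh(C₁ t + C₂).) -/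
/-!
The quantity `(1 + a'²) / a²` is a first integral of the ODE; it is positive, so it equals `C₁²`
with `C₁ > 0`, which gives `√(1 + a'²) = C₁ a` and, by the ODE, `a'' = C₁² a`. Hence `arsinh ∘ a'`
has constant derivative `a'' / √(1 + a'²) = C₁`, so `a' t = sinh (C₁ t + C₂)`, and
`C₁ a = √(1 + a'²) = cosh (C₁ t + C₂)`.
-/

theorem eq_of_hasDerivAt_zero_on {I : Set ℝ} (hopen : IsOpen I) (hconn : I.OrdConnected)
    {f : ℝ → ℝ} (hf : ∀ t ∈ I, HasDerivAt f 0 t) {s t : ℝ} (hs : s ∈ I) (ht : t ∈ I) :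
    f s = f t :=
  hopen.is_const_of_deriv_eq_zero hconn.isPreconnected
    (fun x hx => (hf x hx).differentiableAt.differentiableWithinAt)
    (fun x hx => (hf x hx).deriv) hs ht

/-- Paper's Lemma 2.7, case `ε ε₀ = -1`: the positive solutions of the ODE
`a'' a - (a')² - 1 = 0` on a nonempty open interval are
`a(t) = C₁⁻¹ cosh(C₁ t + C₂)` with `C₁ > 0`. -/
theorem ode_solutions_cosh
    (I : Set ℝ) (hopen : IsOpen I) (hne : I.Nonempty) (hconn : I.OrdConnected)
    (a a' a'' : ℝ → ℝ)
    (hpos : ∀ t ∈ I, 0 < a t)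
    (hd1 : ∀ t ∈ I, HasDerivAt a (a' t) t)
    (hd2 : ∀ t ∈ I, HasDerivAt a' (a'' t) t)
    (hode : ∀ t ∈ I, a'' t * a t - (a' t) ^ 2 - 1 = 0) :
    ∃ C₁ : ℝ, 0 < C₁ ∧ ∃ C₂ : ℝ, ∀ t ∈ I, a t = Real.cosh (C₁ * t + C₂) / C₁ := by
  obtain ⟨t₀, ht₀⟩ := hne
  have hfirst : ∀ t ∈ I, HasDerivAt (fun t => (1 + a' t ^ 2) / a t ^ 2) 0 t := by
    intro t ht
    have ha := (hpos t ht).ne'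
    have h := (((hd2 t ht).pow 2).const_add 1).fun_div ((hd1 t ht).pow 2) (pow_ne_zero 2 ha)
    refine h.congr_deriv ?_
    rw [div_eq_zero_iff]
    left
    simp only [Pi.pow_apply]
    push_cast
    linear_combination 2 * a t * a' t * hode t ht
  have ha₀ := hpos t₀ ht₀
  obtain ⟨C, hC, hCsq⟩ : ∃ C : ℝ, 0 < C ∧ C ^ 2 = (1 + a' t₀ ^ 2) / a t₀ ^ 2 :=
    ⟨√((1 + a' t₀ ^ 2) / a t₀ ^ 2), by positivity, Real.sq_sqrt (by positivity)⟩
  have hint : ∀ t ∈ I, 1 + a' t ^ 2 = (C * a t) ^ 2 := by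
    intro t ht
    have ha := (hpos t ht).ne'
    have h : (1 + a' t ^ 2) / a t ^ 2 = C ^ 2 :=
      (eq_of_hasDerivAt_zero_on hopen hconn hfirst ht ht₀).trans hCsq.symm
    rw [mul_pow]
    exact (div_eq_iff (pow_ne_zero 2 ha)).1 h
  have hsqrt : ∀ t ∈ I, √(1 + a' t ^ 2) = C * a t := by
    intro t ht
    rw [hint t ht, Real.sqrt_sq (mul_pos hC (hpos t ht)).le]
  have harsinh : ∀ t ∈ I, HasDerivAt (fun t => Real.arsinh (a' t) - C * t) 0 t := by
    intro t ht
    have ha := (hpos t ht).ne'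
    have h := (hd2 t ht).arsinh.sub ((hasDerivAt_id t).const_mul C)
    refine h.congr_deriv ?_
    have ha2 : a'' t = C ^ 2 * a t :=
      mul_right_cancel₀ ha (by linear_combination hode t ht + hint t ht)
    rw [hsqrt t ht, ha2, smul_eq_mul]
    field_simp
    ring
  refine ⟨C, hC, Real.arsinh (a' t₀) - C * t₀, fun t ht => ?_⟩
  have h : Real.arsinh (a' t) - C * t = Real.arsinh (a' t₀) - C * t₀ :=
    eq_of_hasDerivAt_zero_on hopen hconn harsinh ht ht₀
  rw [← h, add_sub_cancel, Real.cosh_arsinh, hsqrt t ht, mul_div_cancel_left₀ _ hC.ne']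
end
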